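/- Let G = (X,E) be a connected graph of finite geometry with geodesic distance d, let P be a sub-probability kernel with P(x,y) > 0 iff x ∼ y and M := inf{ P(x,y) : x ∼ y } > 0, and let V satisfy assumption (D) with base point x₀ and increasing profile W. Then for every connected geodesically convex set D ⊆ X, every non-negative function f which is (𝒰−I)-superharmonic in D, every x ∈ D, and every x_r ∈ D lying on a geodesic path from x₀ to x with d(x_r,x₀) = r < d(x,x₀), one has f(x) ≥ f(x_r) ∏_{i=r+1}^{d(x,x₀)} M/W(i). -/

import Mathlib

/-!
Keeping only the term of one neighbour `y` of `x` in `𝒰 f x ≤ f x`, where `P x y ≥ M`, gives the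
one-step bound `f y * (M / V x) ≤ f x`. Along a walk these bounds multiply. On a geodesic issued
from `x₀` the `i`-th vertex is at distance `i` from `x₀`, so the factor it contributes is
`M / W i`; geodesic convexity keeps the part of the geodesic after `x_r` inside `D`, where the
one-step bound holds.
-/

theorem mul_prod_Icc_le_of_mul_le_succ {R : Type*} [CommSemiring R] [PartialOrder R]
    [IsOrderedRing R] {a c : ℕ → R} {m n : ℕ} (hmn : m ≤ n)
    (hc : ∀ i, m < i → i ≤ n → 0 ≤ c i)
    (ha : ∀ i, m ≤ i → i < n → a i * c (i + 1) ≤ a (i + 1)) :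
    a m * ∏ i ∈ Finset.Icc (m + 1) n, c i ≤ a n := by
  induction n, hmn using Nat.le_induction with
  | base => simp
  | succ n hmn ih =>
    have hn : a m * ∏ i ∈ Finset.Icc (m + 1) n, c i ≤ a n :=
      ih (fun i hmi hin => hc i hmi (hin.trans n.le_succ))
        (fun i hmi hin => ha i hmi (hin.trans n.lt_succ_self))
    calc a m * ∏ i ∈ Finset.Icc (m + 1) (n + 1), c i
        = (a m * ∏ i ∈ Finset.Icc (m + 1) n, c i) * c (n + 1) := by
          rw [Finset.prod_Icc_succ_top (Nat.succ_le_succ hmn), mul_assoc]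
      _ ≤ a n * c (n + 1) :=
          mul_le_mul_of_nonneg_right hn (hc _ (Nat.lt_succ_of_le hmn) le_rfl)
      _ ≤ a (n + 1) := ha n hmn n.lt_succ_self

section Geodesic

variable {X : Type*} {G : SimpleGraph X} {u v : X} {p : G.Walk u v}

/-- A set of vertices is geodesically convex if it contains every vertex of every geodesic
joining two of its points; geodesics are encoded as walks whose length is the distance between
their endpoints. -/
def GeodesicallyConvex (G : SimpleGraph X) (D : Set X) : Prop :=
  ∀ u ∈ D, ∀ v ∈ D, ∀ p : G.Walk u v, p.length = G.dist u v → ∀ w ∈ p.support, w ∈ D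

theorem dist_getVert_of_length_eq_dist (hp : p.length = G.dist u v) {i : ℕ}
    (hi : i ≤ p.length) : G.dist u (p.getVert i) = i := by
  rw [← SimpleGraph.length_eq_dist_of_subwalk hp (p.isSubwalk_take i),
    SimpleGraph.Walk.take_length, min_eq_left hi]

theorem GeodesicallyConvex.getVert_mem {D : Set X} (hD : GeodesicallyConvex G D)
    (hp : p.length = G.dist u v) (hv : v ∈ D) {r i : ℕ} (hr : p.getVert r ∈ D) (hri : r ≤ i) :
    p.getVert i ∈ D :=
  hD _ hr _ hv (p.drop r) (SimpleGraph.length_eq_dist_of_subwalk hp (p.isSubwalk_drop r)) _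
    ((p.drop_isSubwalk_drop hri).support_subset (p.drop i).start_mem_support)

end Geodesic

section FeynmanKac

variable {X : Type*} {P : X → X → ℝ} {V f : X → ℝ} {D : Set X} {M : ℝ}

/-- The Feynman–Kac operator `𝒰` with kernel `P` and potential `V`. The value at `x` is meaningful
only where `V x ≠ 0` and the series converges. -/
noncomputable def feynmanKac (P : X → X → ℝ) (V f : X → ℝ) (x : X) : ℝ :=
  1 / V x * ∑' y, P x y * f y

/-- `f` is `(𝒰 - I)`-superharmonic in `D`. Convergence of the series defining `𝒰 f` on `D` is part
of the notion, since a divergent `tsum` is `0`. -/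
def IsSuperharmonicIn (P : X → X → ℝ) (V f : X → ℝ) (D : Set X) : Prop :=
  ∀ x ∈ D, (Summable fun y => P x y * f y) ∧ feynmanKac P V f x ≤ f x

theorem IsSuperharmonicIn.mul_div_le (hf : IsSuperharmonicIn P V f D) (hf_nonneg : ∀ x, 0 ≤ f x)
    {x y : X} (hx : x ∈ D) (hP : ∀ z, 0 ≤ P x z) (hV : 0 < V x) (hM : M ≤ P x y) :
    f y * (M / V x) ≤ f x := by
  obtain ⟨hsum, hle⟩ := hf x hx
  have hterm : M * f y ≤ ∑' z, P x z * f z :=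
    (mul_le_mul_of_nonneg_right hM (hf_nonneg y)).trans
      (hsum.le_tsum y fun z _ => mul_nonneg (hP z) (hf_nonneg z))
  calc f y * (M / V x) = 1 / V x * (M * f y) := by ring
    _ ≤ feynmanKac P V f x := mul_le_mul_of_nonneg_left hterm (one_div_pos.2 hV).le
    _ ≤ f x := hle

theorem IsSuperharmonicIn.mul_prod_getVert_le (hf : IsSuperharmonicIn P V f D)
    (hf_nonneg : ∀ x, 0 ≤ f x) (hP : ∀ x ∈ D, ∀ y, 0 ≤ P x y) (hV : ∀ x ∈ D, 0 < V x)
    {G : SimpleGraph X} (hM : 0 ≤ M) (hMP : ∀ x ∈ D, ∀ y, G.Adj x y → M ≤ P x y)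
    {u v : X} (p : G.Walk u v) {r : ℕ} (hr : r ≤ p.length) (hD : ∀ i, r < i → p.getVert i ∈ D) :
    f (p.getVert r) * ∏ i ∈ Finset.Icc (r + 1) p.length, (M / V (p.getVert i)) ≤ f v := by
  have hchain := mul_prod_Icc_le_of_mul_le_succ (a := fun i => f (p.getVert i))
    (c := fun i => M / V (p.getVert i)) hr
    (fun i hri _ => div_nonneg hM (hV _ (hD i hri)).le)
    (fun i hri hi => by
      have hmem : p.getVert (i + 1) ∈ D := hD _ (Nat.lt_succ_of_le hri)
      exact hf.mul_div_le hf_nonneg hmem (hP _ hmem) (hV _ hmem)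
        (hMP _ hmem _ (p.adj_getVert_succ hi).symm))
  simpa only [SimpleGraph.Walk.getVert_length] using hchain

theorem stmt6_general {G : SimpleGraph X} (hP : ∀ x ∈ D, ∀ y, 0 ≤ P x y)
    (hM : 0 ≤ M) (hMP : ∀ x ∈ D, ∀ y, G.Adj x y → M ≤ P x y)
    {x₀ : X} {W : ℕ → ℝ} (hW : ∀ n, 0 < W n) (hV : ∀ x, V x = W (G.dist x₀ x))
    (hD : GeodesicallyConvex G D) (hf_nonneg : ∀ x, 0 ≤ f x) (hf : IsSuperharmonicIn P V f D)
    {x y : X} (hx : x ∈ D) (hy : y ∈ D) (p : G.Walk x₀ x) (hp : p.length = G.dist x₀ x)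
    (hyp : y ∈ p.support) :
    f y * ∏ i ∈ Finset.Icc (G.dist x₀ y + 1) (G.dist x₀ x), (M / W i) ≤ f x := by
  obtain ⟨r, rfl, hr⟩ := SimpleGraph.Walk.mem_support_iff_exists_getVert.1 hyp
  have hV_getVert : ∀ i ∈ Finset.Icc (r + 1) p.length, M / W i = M / V (p.getVert i) :=
    fun i hi => by rw [hV, dist_getVert_of_length_eq_dist hp (Finset.mem_Icc.1 hi).2]
  rw [dist_getVert_of_length_eq_dist hp hr, ← hp, Finset.prod_congr rfl hV_getVert]
  exact hf.mul_prod_getVert_le hf_nonneg hP (fun z _ => hV z ▸ hW _) hM hMP p hr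
    fun i hri => hD.getVert_mem hp hx hy hri.le

end FeynmanKac

/-- (Theorem 2.9 of the paper.) Let `G = (X,E)` be a connected graph of finite
geometry with geodesic distance `G.dist`, let `P` be a sub-probability kernel with `P x y > 0`
iff `x ∼ y` and `M := inf { P x y : x ∼ y } > 0`, and let `V` satisfy assumption (D) with base
point `x₀` and increasing profile `W`. Then for every connected geodesically convex `D ⊆ X`,
every non-negative `f` which is `(𝒰 - I)`-superharmonic in `D`, every `x ∈ D`, and every
`x_r ∈ D` lying on a geodesic path from `x₀` to `x` with `d(x_r,x₀) = r < d(x,x₀)`, one has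
`f x ≥ f x_r * ∏_{i=r+1}^{d(x,x₀)} M / W i`. -/
theorem stmt6 {X : Type*} [Countable X] [Infinite X]
    (G : SimpleGraph X)
    (hfin : ∀ v : X, {y : X | G.Adj v y}.Finite)
    (hconn : G.Connected)
    (P : X → X → ℝ)
    (hP_nonneg : ∀ x y, 0 ≤ P x y)
    (hP_sum : ∀ x : X, Summable (P x))
    (hP_sub : ∀ x : X, ∑' y, P x y ≤ 1)
    (hP_adj : ∀ x y, 0 < P x y ↔ G.Adj x y)
    (M : ℝ) (hM : 0 < M) (hM_inf : ∀ x y, G.Adj x y → M ≤ P x y)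
    (x₀ : X) (W : ℕ → ℝ) (hW_pos : ∀ n, 0 < W n) (hW_mono : Monotone W)
    (V : X → ℝ) (hV : ∀ x, V x = W (G.dist x₀ x))
    (D : Set X)
    (hD_conn : ∀ u ∈ D, ∀ v ∈ D, ∃ p : G.Walk u v, ∀ w ∈ p.support, w ∈ D)
    (hD_conv : ∀ u ∈ D, ∀ v ∈ D, ∀ p : G.Walk u v,
      p.length = G.dist u v → ∀ w ∈ p.support, w ∈ D)
    (f : X → ℝ) (hf_nonneg : ∀ x, 0 ≤ f x)
    (hf_adm : ∀ x, Summable fun y => P x y * f y)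
    (hsuper : ∀ x ∈ D, (1 / V x) * ∑' y, P x y * f y ≤ f x)
    (x : X) (hx : x ∈ D) (x_r : X) (hx_r : x_r ∈ D) (r : ℕ)
    (p : G.Walk x₀ x) (hp_geo : p.length = G.dist x₀ x)
    (hx_r_mem : x_r ∈ p.support)
    (hx_r_dist : G.dist x₀ x_r = r) (hr_lt : r < G.dist x₀ x) :
    f x_r * ∏ i ∈ Finset.Icc (r + 1) (G.dist x₀ x), (M / W i) ≤ f x := by
  subst hx_r_dist
  exact stmt6_general (fun z _ => hP_nonneg z) hM.le (fun z _ => hM_inf z) hW_pos hV hD_conv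
    hf_nonneg (fun z hz => ⟨hf_adm z, hsuper z hz⟩) hx hx_r p hp_geo hx_r_mem
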